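/- arXiv:2204.08161 — 9 statements merged into one kernel-verified Lean document; each statement's English description precedes it below -/
import Mathlib

section
/- Let G be a finite simple graph and let v be a vertex of G of degree at most 3. If the graph G − v obtained from G by deleting v is (3,1)-decomposable, then G is (3,1)-decomposable. (This is the reducibility behind Lemma 2.2(1): a vertex-minimal graph admitting no (3,1)-decomposition has minimum degree at least 4.) -/
open SimpleGraph

/-- A graph `H` is `d`-degenerate: every induced subgraph on a nonempty vertex set
has a vertex of degree at most `d` (within that induced subgraph). -/
def Degenerate {V : Type*} (d : ℕ) (H : SimpleGraph V) : Prop :=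
  ∀ s : Set V, s.Nonempty → ∃ v ∈ s, (H.neighborSet v ∩ s).ncard ≤ d

/-- The graph `H` has maximum degree at most `h`. -/
def MaxDegreeLE {V : Type*} (h : ℕ) (H : SimpleGraph V) : Prop :=
  ∀ v : V, (H.neighborSet v).ncard ≤ h

/-- A graph `G` is `(d,h)`-decomposable: its edge set is partitioned into the edge
sets of two spanning subgraphs `H₁` and `H₂`, where `H₁` is `d`-degenerate and
`H₂` has maximum degree at most `h`. -/
def Decomposable {V : Type*} (d h : ℕ) (G : SimpleGraph V) : Prop :=
  ∃ H₁ H₂ : SimpleGraph V, H₁ ⊔ H₂ = G ∧ Disjoint H₁ H₂ ∧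
    Degenerate d H₁ ∧ MaxDegreeLE h H₂

theorem stmt_0 {V : Type*} [Fintype V] (G : SimpleGraph V) (v : V)
    (hdeg : (G.neighborSet v).ncard ≤ 3)
    (hdec : Decomposable 3 1 (G.induce {u : V | u ≠ v})) :
    Decomposable 3 1 G := by
  classical
  obtain ⟨H₁, H₂, hsup, hdisj, hD, hM⟩ := hdec
  let f : {u : V // u ∈ {u : V | u ≠ v}} ↪ V := Function.Embedding.subtype _
  have hadj : ∀ a b : {u : V // u ∈ {u : V | u ≠ v}},
      G.Adj a.1 b.1 ↔ H₁.Adj a b ∨ H₂.Adj a b := by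
    intro a b
    have h : (H₁ ⊔ H₂).Adj a b ↔ (G.induce {u : V | u ≠ v}).Adj a b := by rw [hsup]
    rw [SimpleGraph.sup_adj] at h
    exact h.symm
  have hmap : ∀ a b : {u : V // u ∈ {u : V | u ≠ v}},
      H₂.Adj a b → (H₂.map f).Adj a.1 b.1 := by
    intro a b h
    exact (SimpleGraph.map_adj f H₂ _ _).2 ⟨a, b, h, rfl, rfl⟩
  have hle : H₂.map f ≤ G := by
    intro a b h
    obtain ⟨a', b', h', rfl, rfl⟩ := (SimpleGraph.map_adj f H₂ _ _).1 h
    exact (hadj a' b').2 (Or.inr h')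
  refine ⟨G \ H₂.map f, H₂.map f, sdiff_sup_cancel hle, disjoint_sdiff_self_left, ?_, ?_⟩
  · intro s hs
    by_cases hv : v ∈ s
    · refine ⟨v, hv, le_trans (Set.ncard_le_ncard ?_ (Set.toFinite _)) hdeg⟩
      rintro x ⟨hx, -⟩
      exact ((SimpleGraph.sdiff_adj _ _ _ _).1 hx).1
    · have hne : ∀ x ∈ s, x ≠ v := fun x hx h => hv (h ▸ hx)
      obtain ⟨x, hx⟩ := hs
      obtain ⟨u, hu, hcard⟩ := hD (f ⁻¹' s) ⟨⟨x, hne x hx⟩, hx⟩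
      refine ⟨u.1, hu, le_trans (le_trans (Set.ncard_le_ncard (t := f '' (H₁.neighborSet u ∩ f ⁻¹' s)) ?_
        (Set.toFinite _)) (Set.ncard_image_le (Set.toFinite _))) hcard⟩
      rintro y ⟨hy, hys⟩
      have hy' := (SimpleGraph.sdiff_adj _ _ _ _).1 hy
      refine ⟨⟨y, hne y hys⟩, ⟨?_, hys⟩, rfl⟩
      rcases (hadj u ⟨y, hne y hys⟩).1 hy'.1 with h | h
      · exact h
      · exact absurd (hmap _ _ h) hy'.2
  · intro x
    by_cases hx : x = v
    · have : (H₂.map f).neighborSet x = ∅ := by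
        ext y
        simp only [SimpleGraph.mem_neighborSet, Set.mem_empty_iff_false, iff_false]
        intro h
        obtain ⟨a', b', h', ha, hb⟩ := (SimpleGraph.map_adj f H₂ _ _).1 h
        exact a'.2 (ha.trans hx)
      rw [this]; simp
    · refine le_trans (le_trans (Set.ncard_le_ncard (t := f '' (H₂.neighborSet ⟨x, hx⟩)) ?_
        (Set.toFinite _)) (Set.ncard_image_le (Set.toFinite _))) (hM ⟨x, hx⟩)
      intro y h
      obtain ⟨a', b', h', ha, hb⟩ := (SimpleGraph.map_adj f H₂ _ _).1 h
      have : a' = ⟨x, hx⟩ := Subtype.ext ha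
      subst this
      exact ⟨b', h', hb⟩
end

section
/- Let G be a finite simple graph and let u and v be adjacent vertices of G, each of degree at most 4. If G − {u, v} is (3,1)-decomposable, then G is (3,1)-decomposable. (This is the reducibility behind Lemma 2.2(2): a vertex-minimal graph admitting no (3,1)-decomposition does not contain two adjacent 4-vertices.) -/
open SimpleGraph

theorem stmt_1 {V : Type*} [Fintype V] (G : SimpleGraph V) (u v : V)
    (huv : G.Adj u v)
    (hdu : (G.neighborSet u).ncard ≤ 4) (hdv : (G.neighborSet v).ncard ≤ 4)
    (hdec : Decomposable 3 1 (G.induce {w : V | w ≠ u ∧ w ≠ v})) :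
    Decomposable 3 1 G := by
  obtain ⟨K₁, K₂, hsup, hdisj, hdeg, hmax⟩ := hdec
  have hne : u ≠ v := huv.ne
  have hK₂ : ∀ a b, K₂.Adj a b → G.Adj a.1 b.1 := by
    intro a b h
    have : (K₁ ⊔ K₂).Adj a b := Or.inr h
    rw [hsup] at this
    exact this
  let H₂ : SimpleGraph V :=
    { Adj := fun a b => (a = u ∧ b = v) ∨ (a = v ∧ b = u) ∨
        ∃ (ha : a ≠ u ∧ a ≠ v) (hb : b ≠ u ∧ b ≠ v), K₂.Adj ⟨a, ha⟩ ⟨b, hb⟩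
      symm := by
        constructor
        rintro a b (h | h | ⟨ha, hb, h⟩)
        · exact Or.inr (Or.inl ⟨h.2, h.1⟩)
        · exact Or.inl ⟨h.2, h.1⟩
        · exact Or.inr (Or.inr ⟨hb, ha, h.symm⟩)
      loopless := by
        constructor
        rintro a (h | h | ⟨ha, hb, h⟩)
        · exact hne (h.1.symm.trans h.2)
        · exact hne (h.2.symm.trans h.1)
        · exact h.ne rfl }
  have hadj : ∀ a b, H₂.Adj a b ↔ ((a = u ∧ b = v) ∨ (a = v ∧ b = u) ∨
        ∃ (ha : a ≠ u ∧ a ≠ v) (hb : b ≠ u ∧ b ≠ v), K₂.Adj ⟨a, ha⟩ ⟨b, hb⟩) :=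
    fun a b => Iff.rfl
  have hle : H₂ ≤ G := by
    intro a b h
    rcases (hadj a b).1 h with ⟨rfl, rfl⟩ | ⟨rfl, rfl⟩ | ⟨ha, hb, h⟩
    · exact huv
    · exact huv.symm
    · exact hK₂ _ _ h
  have key : ∀ x y : V, G.Adj x y → H₂.Adj x y → (G.neighborSet x).ncard ≤ 4 → ∀ s : Set V,
      ((G \ H₂).neighborSet x ∩ s).ncard ≤ 3 := by
    intro x y hxy h2 h4 s
    have h1 : (G \ H₂).neighborSet x ∩ s ⊆ G.neighborSet x \ {y} := by
      rintro z ⟨hz, -⟩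
      rw [mem_neighborSet, sdiff_adj] at hz
      refine ⟨hz.1, ?_⟩
      rintro rfl
      exact hz.2 h2
    have h3 := Set.ncard_le_ncard h1 (Set.toFinite _)
    have h5 := Set.ncard_diff_singleton_of_mem (s := G.neighborSet x) (a := y) hxy
    omega
  refine ⟨G \ H₂, H₂, sdiff_sup_cancel hle, disjoint_sdiff_self_left, ?_, ?_⟩
  · intro s hs
    by_cases hu : u ∈ s
    · exact ⟨u, hu, key u v huv (Or.inl ⟨rfl, rfl⟩) hdu s⟩
    by_cases hv : v ∈ s
    · exact ⟨v, hv, key v u huv.symm (Or.inr (Or.inl ⟨rfl, rfl⟩)) hdv s⟩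
    have hS : ∀ w ∈ s, w ≠ u ∧ w ≠ v := fun w hw =>
      ⟨fun h => hu (h ▸ hw), fun h => hv (h ▸ hw)⟩
    obtain ⟨w0, hw0⟩ := hs
    obtain ⟨w, hw, hcard⟩ := hdeg (Subtype.val ⁻¹' s) ⟨⟨w0, hS w0 hw0⟩, hw0⟩
    refine ⟨w.1, hw, ?_⟩
    have hsub : (G \ H₂).neighborSet w.1 ∩ s ⊆
        Subtype.val '' (K₁.neighborSet w ∩ Subtype.val ⁻¹' s) := by
      rintro z ⟨hz, hzs⟩
      rw [mem_neighborSet, sdiff_adj] at hz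
      refine ⟨⟨z, hS z hzs⟩, ⟨?_, hzs⟩, rfl⟩
      have h : (K₁ ⊔ K₂).Adj w ⟨z, hS z hzs⟩ := by
        rw [hsup]; exact hz.1
      rcases h with h | h
      · exact h
      · exact absurd (Or.inr (Or.inr ⟨w.2, hS z hzs, h⟩)) hz.2
    exact (Set.ncard_le_ncard hsub (Set.toFinite _)).trans
      ((Set.ncard_image_le (Set.toFinite _)).trans hcard)
  · intro w
    rw [Set.ncard_le_one (Set.toFinite _)]
    intro a ha b hb
    rw [mem_neighborSet, hadj] at ha hb
    by_cases hwS : w ≠ u ∧ w ≠ v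
    · rcases ha with h | h | ⟨_, ha, h⟩
      · exact absurd h.1 hwS.1
      · exact absurd h.1 hwS.2
      rcases hb with h' | h' | ⟨_, hb, h'⟩
      · exact absurd h'.1 hwS.1
      · exact absurd h'.1 hwS.2
      have := (Set.ncard_le_one (Set.toFinite _)).1 (hmax ⟨w, hwS⟩) _ h _ h'
      exact congrArg Subtype.val this
    · rcases ha with h | h | ⟨h, _⟩
      · rcases hb with h' | h' | ⟨h', _⟩
        · exact h.2.trans h'.2.symm
        · exact absurd (h.1.symm.trans h'.1) hne
        · exact absurd h' hwS
      · rcases hb with h' | h' | ⟨h', _⟩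
        · exact absurd (h'.1.symm.trans h.1) hne
        · exact h.2.trans h'.2.symm
        · exact absurd h' hwS
      · exact absurd h hwS
end

section
/- Let G be a finite simple graph containing a vertex v of degree 5, and let v₁, v₂, v₃ be three distinct neighbors of v such that v₁v₂ and v₂v₃ are edges of G, v₁ and v₃ are not adjacent, deg(v₁) = deg(v₃) = 5 and deg(v₂) = 4. If G − {v, v₁, v₂, v₃} is (3,1)-decomposable, then G is (3,1)-decomposable. (This is Case 1 of Lemma 2.3(1), the configuration of two adjacent (4,5,5)-triangles sharing the edge vv₂ with the 4-vertex in the middle.) -/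
open SimpleGraph

theorem stmt_2 {V : Type*} [Fintype V] (G : SimpleGraph V) (v v₁ v₂ v₃ : V)
    (hv : (G.neighborSet v).ncard = 5)
    (hne12 : v₁ ≠ v₂) (hne13 : v₁ ≠ v₃) (hne23 : v₂ ≠ v₃)
    (hadj1 : G.Adj v v₁) (hadj2 : G.Adj v v₂) (hadj3 : G.Adj v v₃)
    (h12 : G.Adj v₁ v₂) (h23 : G.Adj v₂ v₃) (h13 : ¬ G.Adj v₁ v₃)
    (hd1 : (G.neighborSet v₁).ncard = 5) (hd3 : (G.neighborSet v₃).ncard = 5)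
    (hd2 : (G.neighborSet v₂).ncard = 4)
    (hdec : Decomposable 3 1 (G.induce {u : V | u ≠ v ∧ u ≠ v₁ ∧ u ≠ v₂ ∧ u ≠ v₃})) :
    Decomposable 3 1 G := by
  classical
  have e1 := hadj1.ne
  have e2 := hadj2.ne
  have e3 := hadj3.ne
  set S : Set V := {u : V | u ≠ v ∧ u ≠ v₁ ∧ u ≠ v₂ ∧ u ≠ v₃} with hS
  obtain ⟨K₁, K₂, hsup, hdis, hdeg, hmax⟩ := hdec
  -- the new matching: the old one together with `v v₁` and `v₂ v₃`
  let H₂ : SimpleGraph V :=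
    { Adj := fun x y => (∃ (hx : x ∈ S) (hy : y ∈ S), K₂.Adj ⟨x, hx⟩ ⟨y, hy⟩) ∨
        (x = v ∧ y = v₁) ∨ (x = v₁ ∧ y = v) ∨ (x = v₂ ∧ y = v₃) ∨ (x = v₃ ∧ y = v₂)
      symm := ⟨by
        rintro x y (⟨hx, hy, h⟩ | h | h | h | h)
        · exact Or.inl ⟨hy, hx, h.symm⟩
        all_goals tauto⟩
      loopless := ⟨by
        rintro x (⟨hx, hy, h⟩ | h | h | h | h)
        · exact h.ne rfl
        all_goals (obtain ⟨h, h'⟩ := h; subst h; tauto)⟩ }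
  have hH₂ : ∀ x y, H₂.Adj x y ↔ ((∃ (hx : x ∈ S) (hy : y ∈ S), K₂.Adj ⟨x, hx⟩ ⟨y, hy⟩) ∨
        (x = v ∧ y = v₁) ∨ (x = v₁ ∧ y = v) ∨ (x = v₂ ∧ y = v₃) ∨ (x = v₃ ∧ y = v₂)) :=
    fun x y => Iff.rfl
  have hle : H₂ ≤ G := by
    intro x y h
    rcases (hH₂ x y).1 h with ⟨hx, hy, h⟩ | ⟨rfl, rfl⟩ | ⟨rfl, rfl⟩ | ⟨rfl, rfl⟩ | ⟨rfl, rfl⟩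
    · have : (G.induce S).Adj ⟨x, hx⟩ ⟨y, hy⟩ := by rw [← hsup]; exact Or.inr h
      exact this
    · exact hadj1
    · exact hadj1.symm
    · exact h23
    · exact h23.symm
  refine ⟨G \ H₂, H₂, sdiff_sup_cancel hle, disjoint_sdiff_self_left, ?_, ?_⟩
  · -- two removed neighbours from a vertex of degree 5
    have key5 : ∀ (x a b : V) (s : Set V), (G.neighborSet x).ncard = 5 → G.Adj x a → G.Adj x b →
        a ≠ b → a ∉ (G \ H₂).neighborSet x ∩ s → b ∉ (G \ H₂).neighborSet x ∩ s →
        ((G \ H₂).neighborSet x ∩ s).ncard ≤ 3 := by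
      intro x a b s h5 ha hb hab hna hnb
      have hsub : (G \ H₂).neighborSet x ∩ s ⊆ G.neighborSet x \ {a, b} := by
        intro y hy
        refine ⟨hy.1.1, ?_⟩
        rintro (rfl | rfl)
        · exact hna hy
        · exact hnb hy
      have h1 := Set.ncard_le_ncard hsub (Set.toFinite _)
      have h2 : ({a, b} : Set V) ⊆ G.neighborSet x := by
        rintro y (rfl | rfl)
        · exact ha
        · exact hb
      rw [Set.ncard_sdiff h2 (Set.toFinite _), Set.ncard_pair hab, h5] at h1
      exact h1
    intro s hs
    by_cases m2 : v₂ ∈ s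
    · refine ⟨v₂, m2, ?_⟩
      have hsub : (G \ H₂).neighborSet v₂ ∩ s ⊆ G.neighborSet v₂ \ {v₃} := by
        intro y hy
        refine ⟨hy.1.1, ?_⟩
        rintro rfl
        exact hy.1.2 ((hH₂ _ _).2 (by tauto))
      have h1 := Set.ncard_le_ncard hsub (Set.toFinite _)
      have h2 : ({v₃} : Set V) ⊆ G.neighborSet v₂ := by
        rintro y rfl
        exact h23
      rw [Set.ncard_sdiff h2 (Set.toFinite _), Set.ncard_singleton, hd2] at h1
      exact h1
    by_cases m : v ∈ s
    · refine ⟨v, m, key5 v v₁ v₂ s hv hadj1 hadj2 hne12 ?_ (fun h => m2 h.2)⟩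
      intro h
      exact h.1.2 ((hH₂ _ _).2 (by tauto))
    by_cases m1 : v₁ ∈ s
    · exact ⟨v₁, m1, key5 v₁ v v₂ s hd1 hadj1.symm h12 e2 (fun h => m h.2) (fun h => m2 h.2)⟩
    by_cases m3 : v₃ ∈ s
    · exact ⟨v₃, m3, key5 v₃ v v₂ s hd3 hadj3.symm h23.symm e2 (fun h => m h.2)
        (fun h => m2 h.2)⟩
    have hsS : ∀ x ∈ s, x ∈ S := by
      intro x hx
      refine ⟨?_, ?_, ?_, ?_⟩ <;> rintro rfl <;> contradiction
    obtain ⟨x0, hx0⟩ := hs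
    obtain ⟨w, hw, hcard⟩ := hdeg {u : S | (u : V) ∈ s} ⟨⟨x0, hsS x0 hx0⟩, hx0⟩
    refine ⟨w, hw, le_trans ?_ hcard⟩
    rw [← Set.ncard_image_of_injective _ Subtype.val_injective]
    refine Set.ncard_le_ncard ?_ (Set.toFinite _)
    rintro y ⟨⟨hG, hn⟩, hys⟩
    refine ⟨⟨y, hsS y hys⟩, ⟨?_, hys⟩, rfl⟩
    have : (K₁ ⊔ K₂).Adj w ⟨y, hsS y hys⟩ := by rw [hsup]; exact hG
    rcases this with h | h
    · exact h
    · exact absurd ((hH₂ _ _).2 (Or.inl ⟨w.2, hsS y hys, h⟩)) hn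
  · intro x
    rw [Set.ncard_le_one (Set.toFinite _)]
    intro a ha b hb
    have ha := (hH₂ x a).1 ha
    have hb := (hH₂ x b).1 hb
    by_cases hx : x ∈ S
    · obtain ⟨n0, n1, n2, n3⟩ := hx
      have ha' : ∃ (hx : x ∈ S) (hy : a ∈ S), K₂.Adj ⟨x, hx⟩ ⟨a, hy⟩ := by tauto
      have hb' : ∃ (hx : x ∈ S) (hy : b ∈ S), K₂.Adj ⟨x, hx⟩ ⟨b, hy⟩ := by tauto
      obtain ⟨hx, hya, hKa⟩ := ha'
      obtain ⟨_, hyb, hKb⟩ := hb'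
      have := (Set.ncard_le_one (Set.toFinite _)).1 (hmax ⟨x, hx⟩) _ hKa _ hKb
      exact congrArg Subtype.val this
    · have na : ¬ ∃ (hx : x ∈ S) (hy : a ∈ S), K₂.Adj ⟨x, hx⟩ ⟨a, hy⟩ := fun h => hx h.1
      have nb : ¬ ∃ (hx : x ∈ S) (hy : b ∈ S), K₂.Adj ⟨x, hx⟩ ⟨b, hy⟩ := fun h => hx h.1
      have ha := ha.resolve_left na
      have hb := hb.resolve_left nb
      clear na nb hx
      grind
end

section
/- Let G be a finite simple graph containing a vertex v of degree 5, and let v₁, v₂, v₃ be three distinct neighbors of v such that v₁v₂ and v₂v₃ are edges of G, v₁ and v₃ are not adjacent, deg(v₁) = deg(v₃) = 4 and deg(v₂) = 5. If G − {v, v₁, v₂, v₃} is (3,1)-decomposable, then G is (3,1)-decomposable. (This is Case 1 of Lemma 2.3(1), the configuration of two adjacent (4,5,5)-triangles sharing the edge vv₂ with the 5-vertex in the middle.) -/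
open SimpleGraph

theorem stmt_3 {V : Type*} [Fintype V] (G : SimpleGraph V) (v v₁ v₂ v₃ : V)
    (hv : (G.neighborSet v).ncard = 5)
    (hne12 : v₁ ≠ v₂) (hne13 : v₁ ≠ v₃) (hne23 : v₂ ≠ v₃)
    (hadj1 : G.Adj v v₁) (hadj2 : G.Adj v v₂) (hadj3 : G.Adj v v₃)
    (h12 : G.Adj v₁ v₂) (h23 : G.Adj v₂ v₃) (h13 : ¬ G.Adj v₁ v₃)
    (hd1 : (G.neighborSet v₁).ncard = 4) (hd3 : (G.neighborSet v₃).ncard = 4)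
    (hd2 : (G.neighborSet v₂).ncard = 5)
    (hdec : Decomposable 3 1 (G.induce {u : V | u ≠ v ∧ u ≠ v₁ ∧ u ≠ v₂ ∧ u ≠ v₃})) :
    Decomposable 3 1 G := by
  classical
  obtain ⟨K₁, K₂, hsup, hdisj, hdeg, hmax⟩ := hdec
  have nv1 := hadj1.ne
  have nv2 := hadj2.ne
  have nv3 := hadj3.ne
  let P : Set V := {u : V | u ≠ v ∧ u ≠ v₁ ∧ u ≠ v₂ ∧ u ≠ v₃}
  let H₂ : SimpleGraph V :=
    { Adj := fun a b => (∃ (ha : a ∈ P) (hb : b ∈ P), K₂.Adj ⟨a, ha⟩ ⟨b, hb⟩) ∨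
        (a = v ∧ b = v₁) ∨ (a = v₁ ∧ b = v) ∨ (a = v₂ ∧ b = v₃) ∨ (a = v₃ ∧ b = v₂)
      symm := ⟨by
        rintro a b (⟨ha, hb, h⟩ | h | h | h | h)
        · exact Or.inl ⟨hb, ha, h.symm⟩
        all_goals tauto⟩
      loopless := ⟨by
        rintro a (⟨ha, hb, h⟩ | ⟨h, h'⟩ | ⟨h, h'⟩ | ⟨h, h'⟩ | ⟨h, h'⟩)
        · exact h.ne rfl
        all_goals (subst h; simp_all)⟩ }
  have hK₂ : ∀ a b, K₂.Adj a b → G.Adj a.1 b.1 := by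
    intro a b h
    have : (K₁ ⊔ K₂).Adj a b := Or.inr h
    rw [hsup] at this
    exact this
  have hle : H₂ ≤ G := by
    rintro a b (⟨ha, hb, h⟩ | ⟨rfl, rfl⟩ | ⟨rfl, rfl⟩ | ⟨rfl, rfl⟩ | ⟨rfl, rfl⟩)
    · exact hK₂ _ _ h
    · exact hadj1
    · exact hadj1.symm
    · exact h23
    · exact h23.symm
  -- bounding a neighbourhood by deleting a known set of neighbours
  have key : ∀ (u : V) (s : Set V) (T : Finset V) (n : ℕ),
      (G.neighborSet u).ncard = n → (∀ t ∈ T, G.Adj u t) →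
      (∀ t ∈ T, H₂.Adj u t ∨ t ∉ s) → n ≤ 3 + T.card →
      ((G \ H₂).neighborSet u ∩ s).ncard ≤ 3 := by
    intro u s T n hn hT hT' hc
    have h1 : (G \ H₂).neighborSet u ∩ s ⊆ G.neighborSet u \ (T : Set V) := by
      rintro x ⟨hx, hxs⟩
      refine ⟨hx.1, fun hxT => ?_⟩
      rcases hT' x hxT with h | h
      · exact hx.2 h
      · exact h hxs
    have h2 := Set.ncard_le_ncard h1 (Set.toFinite _)
    have h3 : (G.neighborSet u \ (T : Set V)).ncard = (G.neighborSet u).ncard - (T : Set V).ncard :=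
      Set.ncard_sdiff (fun t ht => hT t ht) (Set.toFinite _)
    rw [Set.ncard_coe_finset] at h3
    omega
  refine ⟨G \ H₂, H₂, sdiff_sup_cancel hle, disjoint_sdiff_self_left, ?_, ?_⟩
  · intro s hs
    by_cases m1 : v₁ ∈ s
    · refine ⟨v₁, m1, key v₁ s {v} 4 hd1 ?_ ?_ (by simp)⟩
      · simpa using hadj1.symm
      · intro t ht
        simp only [Finset.mem_singleton] at ht
        subst ht
        exact Or.inl (Or.inr (by simp))
    by_cases m3 : v₃ ∈ s
    · refine ⟨v₃, m3, key v₃ s {v₂} 4 hd3 ?_ ?_ (by simp)⟩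
      · simpa using h23.symm
      · intro t ht
        simp only [Finset.mem_singleton] at ht
        subst ht
        exact Or.inl (Or.inr (by simp))
    by_cases m2 : v₂ ∈ s
    · refine ⟨v₂, m2, key v₂ s {v₁, v₃} 5 hd2 ?_ ?_ (by rw [Finset.card_pair hne13])⟩
      · simpa using ⟨h12.symm, h23⟩
      · intro t ht
        simp only [Finset.mem_insert, Finset.mem_singleton] at ht
        rcases ht with rfl | rfl
        · exact Or.inr m1
        · exact Or.inr m3
    by_cases m0 : v ∈ s
    · refine ⟨v, m0, key v s {v₁, v₃} 5 hv ?_ ?_ (by rw [Finset.card_pair hne13])⟩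
      · simpa using ⟨hadj1, hadj3⟩
      · intro t ht
        simp only [Finset.mem_insert, Finset.mem_singleton] at ht
        rcases ht with rfl | rfl
        · exact Or.inr m1
        · exact Or.inr m3
    have hsP : ∀ x ∈ s, x ∈ P := by
      intro x hx
      refine ⟨?_, ?_, ?_, ?_⟩ <;> (rintro rfl; contradiction)
    obtain ⟨x, hx⟩ := hs
    obtain ⟨u, hu, hud⟩ := hdeg (Subtype.val ⁻¹' s) ⟨⟨x, hsP x hx⟩, hx⟩
    refine ⟨u.1, hu, ?_⟩
    have hsub : (G \ H₂).neighborSet u.1 ∩ s ⊆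
        Subtype.val '' (K₁.neighborSet u ∩ Subtype.val ⁻¹' s) := by
      rintro y ⟨hy, hys⟩
      refine ⟨⟨y, hsP y hys⟩, ⟨?_, hys⟩, rfl⟩
      have hG : (K₁ ⊔ K₂).Adj u ⟨y, hsP y hys⟩ := by
        rw [hsup]
        exact hy.1
      rcases hG with h | h
      · exact h
      · exact absurd (Or.inl ⟨u.2, hsP y hys, h⟩) hy.2
    have h2 := Set.ncard_le_ncard hsub (Set.toFinite _)
    rw [Set.ncard_image_of_injective _ Subtype.val_injective] at h2
    exact h2.trans hud
  · intro u
    by_cases hu : u ∈ P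
    · have hsub : H₂.neighborSet u ⊆ Subtype.val '' (K₂.neighborSet ⟨u, hu⟩) := by
        obtain ⟨a0, a1, a2, a3⟩ := hu
        rintro y (⟨ha, hb, h⟩ | ⟨h, -⟩ | ⟨h, -⟩ | ⟨h, -⟩ | ⟨h, -⟩)
        · exact ⟨⟨y, hb⟩, h, rfl⟩
        all_goals contradiction
      have h2 := Set.ncard_le_ncard hsub (Set.toFinite _)
      rw [Set.ncard_image_of_injective _ Subtype.val_injective] at h2
      exact h2.trans (hmax _)
    · rw [Set.ncard_le_one_iff]
      have hform : ∀ y, y ∈ H₂.neighborSet u → 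
        (u = v ∧ y = v₁) ∨ (u = v₁ ∧ y = v) ∨ (u = v₂ ∧ y = v₃) ∨ (u = v₃ ∧ y = v₂) := by
        rintro y (⟨ha, hb, h⟩ | h)
        · exact absurd ha hu
        · exact h
      intro a b ha hb
      have ha := hform a ha
      have hb := hform b hb
      clear hform key
      grind
end

section
/- Let G be a finite simple graph containing a vertex v of degree 5, and let v₁, v₂, v₃, v₄ be four distinct neighbors of v such that v₁v₂ and v₃v₄ are edges of G and these are the only edges among {v₁, v₂, v₃, v₄} (so v₁ is not adjacent to v₃ or v₄, and v₂ is not adjacent to v₃ or v₄). Suppose deg(v₁) = deg(v₃) = 4 and deg(v₂) = deg(v₄) = 5. If G − {v, v₁, v₂, v₃, v₄} is (3,1)-decomposable, then G is (3,1)-decomposable. (This is Case 2 of Lemma 2.3(1), the configuration of two non-adjacent (4,5,5)-triangles at v.) -/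
open SimpleGraph

theorem stmt_4 {V : Type*} [Fintype V] (G : SimpleGraph V) (v v₁ v₂ v₃ v₄ : V)
    (hv : (G.neighborSet v).ncard = 5)
    (hne12 : v₁ ≠ v₂) (hne13 : v₁ ≠ v₃) (hne14 : v₁ ≠ v₄)
    (hne23 : v₂ ≠ v₃) (hne24 : v₂ ≠ v₄) (hne34 : v₃ ≠ v₄)
    (hadj1 : G.Adj v v₁) (hadj2 : G.Adj v v₂) (hadj3 : G.Adj v v₃) (hadj4 : G.Adj v v₄)
    (h12 : G.Adj v₁ v₂) (h34 : G.Adj v₃ v₄)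
    (h13 : ¬ G.Adj v₁ v₃) (h14 : ¬ G.Adj v₁ v₄)
    (h23 : ¬ G.Adj v₂ v₃) (h24 : ¬ G.Adj v₂ v₄)
    (hd1 : (G.neighborSet v₁).ncard = 4) (hd3 : (G.neighborSet v₃).ncard = 4)
    (hd2 : (G.neighborSet v₂).ncard = 5) (hd4 : (G.neighborSet v₄).ncard = 5)
    (hdec : Decomposable 3 1
      (G.induce {u : V | u ≠ v ∧ u ≠ v₁ ∧ u ≠ v₂ ∧ u ≠ v₃ ∧ u ≠ v₄})) :
    Decomposable 3 1 G := by
  classical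
  set X : Set V := {u : V | u ≠ v ∧ u ≠ v₁ ∧ u ≠ v₂ ∧ u ≠ v₃ ∧ u ≠ v₄} with hX
  obtain ⟨H₁', H₂', hsup, hdisj, hdeg, hmax⟩ := hdec
  have n1 := hadj1.ne
  have n2 := hadj2.ne
  have n3 := hadj3.ne
  have n4 := hadj4.ne
  let H₂ : SimpleGraph V :=
    { Adj := fun a b => (∃ (ha : a ∈ X) (hb : b ∈ X), H₂'.Adj ⟨a, ha⟩ ⟨b, hb⟩) ∨
        (a = v₁ ∧ b = v₂) ∨ (a = v₂ ∧ b = v₁) ∨ (a = v₃ ∧ b = v₄) ∨ (a = v₄ ∧ b = v₃)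
      symm := ⟨by
        rintro a b (⟨ha, hb, h⟩ | h)
        · exact Or.inl ⟨hb, ha, h.symm⟩
        · right; tauto⟩
      loopless := ⟨by
        rintro a (⟨ha, hb, h⟩ | h)
        · exact H₂'.loopless.irrefl _ h
        · grind⟩ }
  have hle : H₂ ≤ G := by
    rintro a b (⟨ha, hb, h⟩ | ⟨rfl, rfl⟩ | ⟨rfl, rfl⟩ | ⟨rfl, rfl⟩ | ⟨rfl, rfl⟩)
    · have : (G.induce X).Adj ⟨a, ha⟩ ⟨b, hb⟩ := by
        rw [← hsup]; exact Or.inr h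
      exact this
    · exact h12
    · exact h12.symm
    · exact h34
    · exact h34.symm
  -- degree bound in `G \ H₂` when the neighbours in `T` do not count
  have key : ∀ (u : V) (s T : Set V), T ⊆ G.neighborSet u →
      (G.neighborSet u).ncard ≤ 3 + T.ncard →
      (∀ x ∈ T, x ∉ s ∨ H₂.Adj u x) →
      ((G \ H₂).neighborSet u ∩ s).ncard ≤ 3 := by
    intro u s T hT hc hx
    have hsub : (G \ H₂).neighborSet u ∩ s ⊆ G.neighborSet u \ T := by
      rintro x ⟨⟨hx1, hx2⟩, hxs⟩
      refine ⟨hx1, fun hxT => ?_⟩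
      rcases hx x hxT with h | h
      · exact h hxs
      · exact hx2 h
    have h1 := Set.ncard_le_ncard hsub (Set.toFinite _)
    have h2 := Set.ncard_sdiff_add_ncard_of_subset hT (Set.toFinite _)
    omega
  refine ⟨G \ H₂, H₂, sdiff_sup_cancel hle, disjoint_sdiff_self_left, ?_, ?_⟩
  · intro s hs
    by_cases m1 : v₁ ∈ s
    · refine ⟨v₁, m1, key v₁ s {v₂} ?_ ?_ ?_⟩
      · rintro x rfl; exact h12
      · simp [hd1]
      · rintro x rfl; right; right; left; exact ⟨rfl, rfl⟩
    by_cases m3 : v₃ ∈ s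
    · refine ⟨v₃, m3, key v₃ s {v₄} ?_ ?_ ?_⟩
      · rintro x rfl; exact h34
      · simp [hd3]
      · rintro x rfl; right; right; right; right; left; exact ⟨rfl, rfl⟩
    by_cases m : v ∈ s
    · refine ⟨v, m, key v s {v₁, v₃} ?_ ?_ ?_⟩
      · rintro x (rfl | rfl); exacts [hadj1, hadj3]
      · rw [hv, Set.ncard_pair hne13]
      · rintro x (rfl | rfl); exacts [Or.inl m1, Or.inl m3]
    by_cases m2 : v₂ ∈ s
    · refine ⟨v₂, m2, key v₂ s {v, v₁} ?_ ?_ ?_⟩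
      · rintro x (rfl | rfl); exacts [hadj2.symm, h12.symm]
      · rw [hd2, Set.ncard_pair n1]
      · rintro x (rfl | rfl); exacts [Or.inl m, Or.inl m1]
    by_cases m4 : v₄ ∈ s
    · refine ⟨v₄, m4, key v₄ s {v, v₃} ?_ ?_ ?_⟩
      · rintro x (rfl | rfl); exacts [hadj4.symm, h34.symm]
      · rw [hd4, Set.ncard_pair n3]
      · rintro x (rfl | rfl); exacts [Or.inl m, Or.inl m3]
    have hsX : ∀ x ∈ s, x ∈ X := by
      intro x hx
      refine ⟨?_, ?_, ?_, ?_, ?_⟩ <;> rintro rfl <;> contradiction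
    obtain ⟨x, hx⟩ := hs
    obtain ⟨u, hu, hcard⟩ := hdeg (Subtype.val ⁻¹' s) ⟨⟨x, hsX x hx⟩, hx⟩
    refine ⟨u.1, hu, le_trans ?_ hcard⟩
    rw [← Set.ncard_image_of_injective _ Subtype.val_injective]
    refine Set.ncard_le_ncard ?_ (Set.toFinite _)
    rintro y ⟨⟨hy1, hy2⟩, hys⟩
    refine ⟨⟨y, hsX y hys⟩, ⟨?_, hys⟩, rfl⟩
    have : (H₁' ⊔ H₂').Adj u ⟨y, hsX y hys⟩ := by
      rw [hsup]; exact hy1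
    rcases this with h | h
    · exact h
    · exact absurd (Or.inl ⟨u.2, hsX y hys, h⟩) hy2
  · intro u
    rw [Set.ncard_le_one (Set.toFinite _)]
    intro a ha b hb
    have hnX : v₁ ∉ X ∧ v₂ ∉ X ∧ v₃ ∉ X ∧ v₄ ∉ X := by simp [hX]
    rcases ha with ⟨hu, ha, h⟩ | ha
    · rcases hb with ⟨_, hb, h'⟩ | hb
      · have := (Set.ncard_le_one (Set.toFinite _)).1 (hmax ⟨u, hu⟩) ⟨a, ha⟩ h ⟨b, hb⟩ h'
        exact congrArg Subtype.val this
      · grind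
    · rcases hb with ⟨hu, hb, h'⟩ | hb
      · grind
      · grind
end

section
/- Let G be a finite simple graph containing a vertex v of degree 5, and let v₁, v₂, v₃, v₄ be four distinct neighbors of v such that v₁v₂, v₂v₃ and v₃v₄ are edges of G and these are the only edges among {v₁, v₂, v₃, v₄} (so v₁ is not adjacent to v₃ or v₄, and v₂ is not adjacent to v₄). Suppose deg(v₁) = 5, deg(v₂) = deg(v₄) = 4 and deg(v₃) = 6. If G − {v, v₁, v₂, v₃, v₄} is (3,1)-decomposable, then G is (3,1)-decomposable. (This is the configuration of Lemma 2.3(2): three consecutive triangles at a 5-vertex, one a (4,5,5)-face and the other two (4,5,6)-faces.) -/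
open SimpleGraph

theorem stmt_5 {V : Type*} [Fintype V] (G : SimpleGraph V) (v v₁ v₂ v₃ v₄ : V)
    (hv : (G.neighborSet v).ncard = 5)
    (hne12 : v₁ ≠ v₂) (hne13 : v₁ ≠ v₃) (hne14 : v₁ ≠ v₄)
    (hne23 : v₂ ≠ v₃) (hne24 : v₂ ≠ v₄) (hne34 : v₃ ≠ v₄)
    (hadj1 : G.Adj v v₁) (hadj2 : G.Adj v v₂) (hadj3 : G.Adj v v₃) (hadj4 : G.Adj v v₄)
    (h12 : G.Adj v₁ v₂) (h23 : G.Adj v₂ v₃) (h34 : G.Adj v₃ v₄)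
    (h13 : ¬ G.Adj v₁ v₃) (h14 : ¬ G.Adj v₁ v₄) (h24 : ¬ G.Adj v₂ v₄)
    (hd1 : (G.neighborSet v₁).ncard = 5)
    (hd2 : (G.neighborSet v₂).ncard = 4) (hd4 : (G.neighborSet v₄).ncard = 4)
    (hd3 : (G.neighborSet v₃).ncard = 6)
    (hdec : Decomposable 3 1
      (G.induce {u : V | u ≠ v ∧ u ≠ v₁ ∧ u ≠ v₂ ∧ u ≠ v₃ ∧ u ≠ v₄})) :
    Decomposable 3 1 G := by
  classical
  have hvv1 := hadj1.ne
  have hvv2 := hadj2.ne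
  have hvv3 := hadj3.ne
  have hvv4 := hadj4.ne
  generalize hW : {u : V | u ≠ v ∧ u ≠ v₁ ∧ u ≠ v₂ ∧ u ≠ v₃ ∧ u ≠ v₄} = W at hdec
  have hWm : ∀ u, u ∈ W ↔ (u ≠ v ∧ u ≠ v₁ ∧ u ≠ v₂ ∧ u ≠ v₃ ∧ u ≠ v₄) := by
    intro u
    rw [← hW]
    rfl
  obtain ⟨K₁, K₂, hsup, hdisj, hdeg, hmax⟩ := hdec
  have hK2G : ∀ x y : W, K₂.Adj x y → G.Adj x y := by
    intro x y h
    have : (K₁ ⊔ K₂).Adj x y := Or.inr h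
    rw [hsup] at this
    exact this
  have hK1of : ∀ x y : W, G.Adj x y → ¬ K₂.Adj x y → K₁.Adj x y := by
    intro x y h h2
    have : (K₁ ⊔ K₂).Adj x y := by rw [hsup]; exact h
    exact this.resolve_right h2
  let P : V → V → Prop := fun x y =>
    (∃ (hx : x ∈ W) (hy : y ∈ W), K₂.Adj ⟨x, hx⟩ ⟨y, hy⟩) ∨
    (x = v ∧ y = v₁) ∨ (x = v₁ ∧ y = v) ∨ (x = v₂ ∧ y = v₃) ∨ (x = v₃ ∧ y = v₂)
  have hPsymm : ∀ x y, P x y → P y x := by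
    rintro x y (⟨hx, hy, h⟩ | h | h | h | h)
    · exact Or.inl ⟨hy, hx, h.symm⟩
    all_goals simp only [P]; tauto
  have hPG : ∀ x y, P x y → G.Adj x y := by
    rintro x y (⟨hx, hy, h⟩ | ⟨rfl, rfl⟩ | ⟨rfl, rfl⟩ | ⟨rfl, rfl⟩ | ⟨rfl, rfl⟩)
    · exact hK2G _ _ h
    · exact hadj1
    · exact hadj1.symm
    · exact h23
    · exact h23.symm
  let H : SimpleGraph V :=
    { Adj := P
      symm := ⟨fun x y h => hPsymm x y h⟩
      loopless := ⟨fun x h => (hPG x x h).ne rfl⟩ }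
  have hHG : H ≤ G := fun x y h => hPG x y h
  have hP1 : P v v₁ := Or.inr (Or.inl ⟨rfl, rfl⟩)
  have hP2 : P v₂ v₃ := by simp [P]
  -- counting helper
  have key : ∀ (x : V) (T s : Set V) (n : ℕ) (_ : (G.neighborSet x).ncard = n)
      (_ : T ⊆ G.neighborSet x) (_ : n ≤ T.ncard + 3)
      (_ : ∀ t ∈ T, t ∉ s ∨ P x t),
      ((G \ H).neighborSet x ∩ s).ncard ≤ 3 := by
    intro x T s n hn hT hc ht
    have hsub : (G \ H).neighborSet x ∩ s ⊆ G.neighborSet x \ T := by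
      rintro y ⟨hy, hys⟩
      have hy' : G.Adj x y ∧ ¬ P x y := hy
      refine ⟨hy'.1, fun hyT => ?_⟩
      rcases ht y hyT with h | h
      · exact h hys
      · exact hy'.2 h
    have h1 := Set.ncard_le_ncard hsub (Set.toFinite _)
    rw [Set.ncard_sdiff hT (Set.toFinite _)] at h1
    omega
  refine ⟨G \ H, H, sdiff_sup_cancel hHG, disjoint_sdiff_self_left, ?_, ?_⟩
  · intro s hs
    by_cases m2 : v₂ ∈ s
    · refine ⟨v₂, m2, key v₂ {v₃} s 4 hd2 (by simpa using h23) (by simp) ?_⟩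
      rintro t rfl
      exact Or.inr hP2
    by_cases m : v ∈ s
    · refine ⟨v, m, key v {v₁, v₂} s 5 hv ?_ (by rw [Set.ncard_pair hne12]) ?_⟩
      · rintro t (rfl | rfl) <;> assumption
      · rintro t (rfl | rfl)
        · exact Or.inr hP1
        · exact Or.inl m2
    by_cases m4 : v₄ ∈ s
    · refine ⟨v₄, m4, key v₄ {v} s 4 hd4 (by simpa using hadj4.symm) (by simp) ?_⟩
      rintro t rfl
      exact Or.inl m
    by_cases m3 : v₃ ∈ s
    · refine ⟨v₃, m3, key v₃ {v, v₂, v₄} s 6 hd3 ?_ ?_ ?_⟩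
      · rintro t (rfl | rfl | rfl)
        · exact hadj3.symm
        · exact h23.symm
        · exact h34
      · rw [Set.ncard_eq_three.2 ⟨v, v₂, v₄, hvv2, hvv4, hne24, rfl⟩]
      · rintro t (rfl | rfl | rfl) <;> exact Or.inl (by assumption)
    by_cases m1 : v₁ ∈ s
    · refine ⟨v₁, m1, key v₁ {v, v₂} s 5 hd1 ?_ (by rw [Set.ncard_pair hvv2]) ?_⟩
      · rintro t (rfl | rfl)
        · exact hadj1.symm
        · exact h12
      · rintro t (rfl | rfl) <;> exact Or.inl (by assumption)
    have hsW : ∀ x ∈ s, x ∈ W := by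
      intro x hx
      rw [hWm]
      refine ⟨?_, ?_, ?_, ?_, ?_⟩ <;> rintro rfl <;> contradiction
    obtain ⟨x, hx⟩ := hs
    obtain ⟨w, hw, hwc⟩ := hdeg {u : W | (u : V) ∈ s} ⟨⟨x, hsW x hx⟩, hx⟩
    refine ⟨w, hw, le_trans ?_ hwc⟩
    rw [← Set.ncard_image_of_injective _ (Subtype.val_injective (p := fun u => u ∈ W))]
    refine Set.ncard_le_ncard ?_ (Set.toFinite _)
    rintro y ⟨hy, hys⟩
    have hy' : G.Adj w y ∧ ¬ P w y := hy
    refine ⟨⟨y, hsW y hys⟩, ⟨?_, hys⟩, rfl⟩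
    exact hK1of _ _ hy'.1 fun h => hy'.2 (Or.inl ⟨w.2, hsW y hys, h⟩)
  · intro x
    by_cases hx : x ∈ W
    · refine le_trans ?_ (hmax ⟨x, hx⟩)
      rw [← Set.ncard_image_of_injective _ (Subtype.val_injective (p := fun u => u ∈ W))]
      refine Set.ncard_le_ncard ?_ (Set.toFinite _)
      have hx' := (hWm x).1 hx
      rintro y (⟨_, hy, h⟩ | h | h | h | h)
      · exact ⟨⟨y, hy⟩, h, rfl⟩
      all_goals exfalso; tauto
    · rw [Set.ncard_le_one_iff]
      intro a b ha hb
      have ha' : P x a := ha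
      have hb' : P x b := hb
      simp only [P] at ha' hb'
      rcases ha' with ⟨h, _⟩ | ha' <;> rcases hb' with ⟨h', _⟩ | hb'
      · exact absurd h hx
      · exact absurd h hx
      · exact absurd h' hx
      · clear ha hb
        grind
end

section
/- Let G be a finite simple graph and let v be a vertex of G of degree at most 2. If the graph G − v obtained from G by deleting v is (2,1)-decomposable, then G is (2,1)-decomposable. (This is the reducibility behind Lemma 2.6(1): a vertex-minimal graph admitting no (2,1)-decomposition has minimum degree at least 3.) -/
open SimpleGraph

theorem stmt_6 {V : Type*} [Fintype V] (G : SimpleGraph V) (v : V)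
    (hdeg : (G.neighborSet v).ncard ≤ 2)
    (hdec : Decomposable 2 1 (G.induce {u : V | u ≠ v})) :
    Decomposable 2 1 G := by
  obtain ⟨H₁, H₂, hsup, hdisj, h1, h2⟩ := hdec
  have hadj : ∀ a b, (H₁ ⊔ H₂).Adj a b ↔ G.Adj a.1 b.1 := by
    intro a b
    rw [hsup]
    simp
  let K : SimpleGraph V := H₂.map (Function.Embedding.subtype _)
  have hK : ∀ a b, K.Adj a b ↔ ∃ x y, H₂.Adj x y ∧ x.1 = a ∧ y.1 = b := by
    intro a b
    simp only [K, SimpleGraph.map_adj, Function.Embedding.subtype_apply]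
  have hKG : K ≤ G := by
    intro a b hab
    obtain ⟨x, y, hxy, rfl, rfl⟩ := (hK a b).1 hab
    exact (hadj x y).1 (Or.inr hxy)
  refine ⟨G \ K, K, sdiff_sup_cancel hKG, disjoint_sdiff_self_left, ?_, ?_⟩
  · intro s hs
    by_cases hv : v ∈ s
    · refine ⟨v, hv, le_trans (Set.ncard_le_ncard ?_ (Set.toFinite _)) hdeg⟩
      rintro x ⟨hx, -⟩
      exact hx.1
    · obtain ⟨a, ha⟩ := hs
      have hne : ∀ x ∈ s, x ≠ v := by
        rintro x hx rfl
        exact hv hx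
      obtain ⟨w, hw, hc⟩ := h1 (Subtype.val ⁻¹' s) ⟨⟨a, hne a ha⟩, ha⟩
      refine ⟨w.1, hw, le_trans (Set.ncard_le_ncard ?_ (Set.toFinite _))
        (le_trans (Set.ncard_image_le (f := Subtype.val) (Set.toFinite _)) hc)⟩
      rintro x ⟨hx, hxs⟩
      refine ⟨⟨x, hne x hxs⟩, ⟨?_, hxs⟩, rfl⟩
      rcases (hadj w ⟨x, hne x hxs⟩).2 hx.1 with h | h
      · exact h
      · exact absurd ((hK _ _).2 ⟨_, _, h, rfl, rfl⟩) hx.2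
  · intro u
    by_cases hu : u = v
    · have : K.neighborSet u = ∅ := by
        ext b
        simp only [SimpleGraph.mem_neighborSet, Set.mem_empty_iff_false, iff_false]
        intro hb
        obtain ⟨x, y, -, hx, -⟩ := (hK u b).1 hb
        exact x.2 (hx.trans hu)
      rw [this]
      simp
    · refine le_trans (Set.ncard_le_ncard ?_ (Set.toFinite _))
        (le_trans (Set.ncard_image_le (f := Subtype.val) (Set.toFinite _)) (h2 ⟨u, hu⟩))
      intro b hb
      obtain ⟨x, y, hxy, rfl, rfl⟩ := (hK u b).1 hb
      exact ⟨y, hxy, rfl⟩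
end

section
/- Let G be a finite simple graph and let u and v be adjacent vertices of G, each of degree at most 3. If G − {u, v} is (2,1)-decomposable, then G is (2,1)-decomposable. (This is the reducibility behind Lemma 2.6(2): a vertex-minimal graph admitting no (2,1)-decomposition does not contain two adjacent 3-vertices.) -/
open SimpleGraph

theorem stmt_7 {V : Type*} [Fintype V] (G : SimpleGraph V) (u v : V)
    (huv : G.Adj u v)
    (hdu : (G.neighborSet u).ncard ≤ 3) (hdv : (G.neighborSet v).ncard ≤ 3)
    (hdec : Decomposable 2 1 (G.induce {w : V | w ≠ u ∧ w ≠ v})) :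
    Decomposable 2 1 G := by
  classical
  obtain ⟨K₁, K₂, hK, hdisj, hdeg, hmax⟩ := hdec
  have huv' : u ≠ v := huv.ne
  have hadj : ∀ a b, (K₁.Adj a b ∨ K₂.Adj a b) ↔ G.Adj a.1 b.1 := by
    intro a b
    rw [← SimpleGraph.sup_adj, hK]
    rfl
  have hno : ∀ a b, K₁.Adj a b → ¬ K₂.Adj a b := by
    intro a b h1 h2
    have h := (SimpleGraph.disjoint_left.mp hdisj) a b h1
    exact h h2
  let H₂ : SimpleGraph V :=
    { Adj := fun a b => (∃ ha hb, K₂.Adj ⟨a, ha⟩ ⟨b, hb⟩) ∨ (a = u ∧ b = v) ∨ (a = v ∧ b = u)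
      symm := ⟨by
        rintro a b (⟨ha, hb, h⟩ | h | h)
        · exact Or.inl ⟨hb, ha, h.symm⟩
        · exact Or.inr (Or.inr ⟨h.2, h.1⟩)
        · exact Or.inr (Or.inl ⟨h.2, h.1⟩)⟩
      loopless := ⟨by
        rintro a (⟨ha, hb, h⟩ | h | h)
        · exact h.ne rfl
        · exact huv' (h.1.symm.trans h.2)
        · exact huv' (h.2.symm.trans h.1)⟩ }
  have hle : H₂ ≤ G := by
    rintro a b (⟨ha, hb, h⟩ | ⟨rfl, rfl⟩ | ⟨rfl, rfl⟩)
    · exact (hadj _ _).1 (Or.inr h)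
    · exact huv
    · exact huv.symm
  have hsub : ∀ (x y : V) (S : Set V), (G.neighborSet x).ncard ≤ 3 → G.Adj x y → H₂.Adj x y →
      (((G \ H₂).neighborSet x) ∩ S).ncard ≤ 2 := by
    intro x y S h3 hxy hxy2
    have h1 : ((G \ H₂).neighborSet x) ∩ S ⊆ G.neighborSet x \ {y} := by
      rintro z ⟨hz, -⟩
      refine ⟨hz.1, ?_⟩
      rintro rfl
      exact hz.2 hxy2
    have h2 := Set.ncard_le_ncard h1 (Set.toFinite _)
    have h4 := Set.ncard_sdiff_singleton_add_one (s := G.neighborSet x) (a := y) hxy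
      (Set.toFinite _)
    omega
  refine ⟨G \ H₂, H₂, sdiff_sup_cancel hle, disjoint_sdiff_self_left, ?_, ?_⟩
  · intro s hs
    by_cases hu : u ∈ s
    · exact ⟨u, hu, hsub u v s hdu huv (Or.inr (Or.inl ⟨rfl, rfl⟩))⟩
    by_cases hv : v ∈ s
    · exact ⟨v, hv, hsub v u s hdv huv.symm (Or.inr (Or.inr ⟨rfl, rfl⟩))⟩
    have hW : ∀ x ∈ s, x ≠ u ∧ x ≠ v := fun x hx =>
      ⟨fun h => hu (h ▸ hx), fun h => hv (h ▸ hx)⟩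
    obtain ⟨x, hx⟩ := hs
    obtain ⟨w, hw, hcard⟩ := hdeg (Subtype.val ⁻¹' s) ⟨⟨x, hW x hx⟩, hx⟩
    refine ⟨w.1, hw, ?_⟩
    have h1 : ((G \ H₂).neighborSet w.1) ∩ s ⊆
        Subtype.val '' (K₁.neighborSet w ∩ (Subtype.val ⁻¹' s)) := by
      rintro z ⟨hz, hzs⟩
      refine ⟨⟨z, hW z hzs⟩, ⟨?_, hzs⟩, rfl⟩
      rcases (hadj w ⟨z, hW z hzs⟩).2 hz.1 with h | h
      · exact h
      · exact absurd (Or.inl ⟨w.2, hW z hzs, h⟩) hz.2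
    exact (Set.ncard_le_ncard h1 (Set.toFinite _)).trans
      ((Set.ncard_image_le (Set.toFinite _)).trans hcard)
  · intro w
    rw [Set.ncard_le_one (Set.toFinite _)]
    intro a ha b hb
    rcases ha with ⟨hw, ha, h⟩ | ⟨h, h'⟩ | ⟨h, h'⟩
    · rcases hb with ⟨_, hb, g⟩ | ⟨g, g'⟩ | ⟨g, g'⟩
      · have := (Set.ncard_le_one (Set.toFinite _)).1 (hmax ⟨w, hw⟩) _ h _ g
        exact congrArg Subtype.val this
      · exact absurd g hw.1
      · exact absurd g hw.2
    · rcases hb with ⟨hw, hb, g⟩ | ⟨g, g'⟩ | ⟨g, g'⟩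
      · exact absurd h hw.1
      · exact h'.trans g'.symm
      · exact absurd (h.symm.trans g) huv'
    · rcases hb with ⟨hw, hb, g⟩ | ⟨g, g'⟩ | ⟨g, g'⟩
      · exact absurd h hw.2
      · exact absurd (g.symm.trans h) huv'
      · exact h'.trans g'.symm
end

section
/- Let G be a finite simple graph containing four distinct vertices v₁, v₂, v₃, v₄ forming a 4-cycle (the edges v₁v₂, v₂v₃, v₃v₄, v₄v₁ all lie in G) with no chords (v₁ is not adjacent to v₃ and v₂ is not adjacent to v₄), such that deg(v₁) = deg(v₃) = 3 and deg(v₂) = deg(v₄) = 4. If G − {v₁, v₂, v₃, v₄} is (2,1)-decomposable, then G is (2,1)-decomposable. (This is the reducibility of the (3,4,3,4)-face configuration from Lemma 2.8.) -/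
open SimpleGraph

theorem stmt_8 {V : Type*} [Fintype V] (G : SimpleGraph V) (v₁ v₂ v₃ v₄ : V)
    (hne12 : v₁ ≠ v₂) (hne13 : v₁ ≠ v₃) (hne14 : v₁ ≠ v₄)
    (hne23 : v₂ ≠ v₃) (hne24 : v₂ ≠ v₄) (hne34 : v₃ ≠ v₄)
    (h12 : G.Adj v₁ v₂) (h23 : G.Adj v₂ v₃) (h34 : G.Adj v₃ v₄) (h41 : G.Adj v₄ v₁)
    (h13 : ¬ G.Adj v₁ v₃) (h24 : ¬ G.Adj v₂ v₄)
    (hd1 : (G.neighborSet v₁).ncard = 3) (hd3 : (G.neighborSet v₃).ncard = 3)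
    (hd2 : (G.neighborSet v₂).ncard = 4) (hd4 : (G.neighborSet v₄).ncard = 4)
    (hdec : Decomposable 2 1
      (G.induce {u : V | u ≠ v₁ ∧ u ≠ v₂ ∧ u ≠ v₃ ∧ u ≠ v₄})) :
    Decomposable 2 1 G := by
  classical
  set S : Set V := {u : V | u ≠ v₁ ∧ u ≠ v₂ ∧ u ≠ v₃ ∧ u ≠ v₄} with hS
  obtain ⟨K₁, K₂, hsup, hdis, hdeg, hmax⟩ := hdec
  have hK2G : ∀ a b : S, K₂.Adj a b → G.Adj a b := by
    intro a b h
    have : (K₁ ⊔ K₂).Adj a b := Or.inr h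
    rw [hsup] at this
    exact this
  have hGK : ∀ a b : S, G.Adj a b → K₁.Adj a b ∨ K₂.Adj a b := by
    intro a b h
    have : (K₁ ⊔ K₂).Adj a b := by
      rw [hsup]
      exact h
    exact this
  let H₂ : SimpleGraph V :=
    { Adj := fun a b => (∃ (ha : a ∈ S) (hb : b ∈ S), K₂.Adj ⟨a, ha⟩ ⟨b, hb⟩) ∨
        (a = v₁ ∧ b = v₂) ∨ (a = v₂ ∧ b = v₁) ∨ (a = v₃ ∧ b = v₄) ∨ (a = v₄ ∧ b = v₃)
      symm := ⟨by
        rintro a b (⟨ha, hb, h⟩ | h)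
        · exact Or.inl ⟨hb, ha, h.symm⟩
        · right; tauto⟩
      loopless := ⟨by
        rintro a (⟨ha, hb, h⟩ | h)
        · exact K₂.loopless.irrefl _ h
        · grind⟩ }
  have hH2 : ∀ a b, H₂.Adj a b ↔ ((∃ (ha : a ∈ S) (hb : b ∈ S), K₂.Adj ⟨a, ha⟩ ⟨b, hb⟩) ∨
        (a = v₁ ∧ b = v₂) ∨ (a = v₂ ∧ b = v₁) ∨ (a = v₃ ∧ b = v₄) ∨ (a = v₄ ∧ b = v₃)) :=
    fun a b => Iff.rfl
  have hle : H₂ ≤ G := by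
    intro a b h
    rcases (hH2 a b).1 h with ⟨ha, hb, h⟩ | ⟨rfl, rfl⟩ | ⟨rfl, rfl⟩ | ⟨rfl, rfl⟩ | ⟨rfl, rfl⟩
    · exact hK2G _ _ h
    · exact h12
    · exact h12.symm
    · exact h34
    · exact h34.symm
  have hdel1 : ∀ (v w : V) (s : Set V), (G.neighborSet v).ncard = 3 → G.Adj v w → H₂.Adj v w →
      ((G \ H₂).neighborSet v ∩ s).ncard ≤ 2 := by
    intro v w s hc hvw h2
    have hsub : (G \ H₂).neighborSet v ∩ s ⊆ G.neighborSet v \ {w} := by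
      rintro x ⟨hx, -⟩
      refine ⟨hx.1, ?_⟩
      rintro rfl
      exact hx.2 h2
    have h1 := Set.ncard_le_ncard hsub (Set.toFinite _)
    rw [Set.ncard_sdiff_singleton_of_mem (show w ∈ G.neighborSet v from hvw)] at h1
    omega
  have hdel2 : ∀ (v a b : V) (s : Set V), (G.neighborSet v).ncard = 4 → G.Adj v a → G.Adj v b →
      a ≠ b → a ∉ s → b ∉ s → ((G \ H₂).neighborSet v ∩ s).ncard ≤ 2 := by
    intro v a b s hc ha hb hab has hbs
    have hsub : (G \ H₂).neighborSet v ∩ s ⊆ (G.neighborSet v \ {a}) \ {b} := by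
      rintro x ⟨hx, hxs⟩
      refine ⟨⟨hx.1, ?_⟩, ?_⟩
      · rintro rfl
        exact has hxs
      · rintro rfl
        exact hbs hxs
    have h1 := Set.ncard_le_ncard hsub (Set.toFinite _)
    rw [Set.ncard_sdiff_singleton_of_mem
        (show b ∈ G.neighborSet v \ {a} from ⟨hb, fun h => hab h.symm⟩),
      Set.ncard_sdiff_singleton_of_mem (show a ∈ G.neighborSet v from ha)] at h1
    omega
  refine ⟨G \ H₂, H₂, sdiff_sup_cancel hle, disjoint_sdiff_self_left, ?_, ?_⟩
  · intro s hs
    by_cases m1 : v₁ ∈ s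
    · exact ⟨v₁, m1, hdel1 v₁ v₂ s hd1 h12 (by rw [hH2]; tauto)⟩
    by_cases m3 : v₃ ∈ s
    · exact ⟨v₃, m3, hdel1 v₃ v₄ s hd3 h34 (by rw [hH2]; tauto)⟩
    by_cases m2 : v₂ ∈ s
    · exact ⟨v₂, m2, hdel2 v₂ v₁ v₃ s hd2 h12.symm h23 hne13 m1 m3⟩
    by_cases m4 : v₄ ∈ s
    · exact ⟨v₄, m4, hdel2 v₄ v₁ v₃ s hd4 h41 h34.symm hne13 m1 m3⟩
    have hsS : s ⊆ S := by
      intro x hx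
      refine ⟨?_, ?_, ?_, ?_⟩ <;> (rintro rfl; contradiction)
    obtain ⟨x, hx⟩ := hs
    obtain ⟨v, hv, hvc⟩ := hdeg (Subtype.val ⁻¹' s) ⟨⟨x, hsS hx⟩, hx⟩
    refine ⟨v, hv, ?_⟩
    have hsub : (G \ H₂).neighborSet v ∩ s ⊆
        Subtype.val '' (K₁.neighborSet v ∩ Subtype.val ⁻¹' s) := by
      rintro y ⟨hy, hys⟩
      refine ⟨⟨y, hsS hys⟩, ⟨?_, hys⟩, rfl⟩
      rcases hGK v ⟨y, hsS hys⟩ hy.1 with h | h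
      · exact h
      · exact absurd ((hH2 _ _).2 (Or.inl ⟨v.2, hsS hys, h⟩)) hy.2
    exact (Set.ncard_le_ncard hsub (Set.toFinite _)).trans
      ((Set.ncard_image_le (Set.toFinite _)).trans hvc)
  · intro v
    by_cases hv : v ∈ S
    · have hsub : H₂.neighborSet v ⊆ Subtype.val '' (K₂.neighborSet ⟨v, hv⟩) := by
        intro y hy
        rcases (hH2 v y).1 hy with ⟨ha, hb, h⟩ | h
        · exact ⟨⟨y, hb⟩, h, rfl⟩
        · obtain ⟨a1, a2, a3, a4⟩ := hv
          tauto
      exact (Set.ncard_le_ncard hsub (Set.toFinite _)).trans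
        ((Set.ncard_image_le (Set.toFinite _)).trans (hmax _))
    · rw [Set.ncard_le_one (Set.toFinite _)]
      intro a ha b hb
      have e1 := (hH2 v a).1 ha
      have e2 := (hH2 v b).1 hb
      have f1 := e1.resolve_left (fun ⟨h, _⟩ => hv h)
      have f2 := e2.resolve_left (fun ⟨h, _⟩ => hv h)
      clear e1 e2 ha hb
      grind
end
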